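/- Let h be a smooth compactly supported function on ℝ^d, and for λ ≥ 1 set h_λ(x) = h(x)·exp(−πiλ|x|²). Then for all 1 ≤ p, q ≤ ∞ there exists a constant c > 0 such that ‖ĥ_λ‖_{W(L^p,L^q)} ≤ c · λ^{d/q − d/2} for all λ ≥ 1, where ĥ_λ denotes the Fourier transform of h_λ. -/

import Mathlib

open MeasureTheory SchwartzMap Complex ENNReal NNReal

noncomputable section

/-- Mixed `L^p`-type norm of an `ℝ≥0∞`-valued function, with the usual
`essSup` modification when `p = ∞`. -/
def lqNorm {α : Type*} [MeasurableSpace α] (μ : Measure α) (p : ℝ≥0∞)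
    (f : α → ℝ≥0∞) : ℝ≥0∞ :=
  if p = ∞ then essSup f μ else (∫⁻ a, f a ^ p.toReal ∂μ) ^ (1 / p.toReal)

/-- Conjugate exponent in `ℝ≥0∞` : `1/p + 1/p' = 1`, with `1' = ∞`, `∞' = 1`. -/
def dualExp (p : ℝ≥0∞) : ℝ≥0∞ :=
  if p = 1 then ∞ else if p = ∞ then 1 else ENNReal.ofReal (p.toReal / (p.toReal - 1))

/-- `1/p` as a real number, with the convention `1/∞ = 0`. -/
def invR (p : ℝ≥0∞) : ℝ := (p⁻¹).toReal

/-- The Gaussian window `G(t) = exp(-π |t|²)` (as a complex-valued function). -/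
def gaussWin {ι : Type*} [Fintype ι] (t : EuclideanSpace ℝ ι) : ℂ :=
  Complex.exp (-(Real.pi * ‖t‖ ^ 2))

/-- Short-time Fourier transform with Gaussian window:
`V_G F (x, ω) = ∫ F t * conj (G (t - x)) * exp (-2πi ω⬝t) dt`. -/
def STFT {ι : Type*} [Fintype ι] (F : EuclideanSpace ℝ ι → ℂ)
    (x ω : EuclideanSpace ℝ ι) : ℂ :=
  ∫ t, F t * (starRingEnd ℂ) (gaussWin (t - x)) *
    Complex.exp (Complex.I * (-(2 * Real.pi * (inner ℝ ω t : ℝ))))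

/-- Modulation space norm `M^{p,q}`. -/
def modNorm {ι : Type*} [Fintype ι] (p q : ℝ≥0∞)
    (F : EuclideanSpace ℝ ι → ℂ) : ℝ≥0∞ :=
  lqNorm volume q fun ω => lqNorm volume p fun x => (‖STFT F x ω‖₊ : ℝ≥0∞)

/-- Wiener amalgam norm `W(𝓕 L^p, L^q)` (local component Fourier–Lebesgue). -/
def wFLNorm {ι : Type*} [Fintype ι] (p q : ℝ≥0∞)
    (F : EuclideanSpace ℝ ι → ℂ) : ℝ≥0∞ :=
  lqNorm volume q fun x => lqNorm volume p fun ω => (‖STFT F x ω‖₊ : ℝ≥0∞)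

/-- The unit cube `[0,1)^d`. -/
def unitCube (d : ℕ) : Set (EuclideanSpace ℝ (Fin d)) :=
  {x | ∀ i, x i ∈ Set.Ico (0 : ℝ) 1}

/-- Wiener amalgam norm
`‖f‖_{W(L^r,L^s)} = ( Σ_{n ∈ ℤ^d} ( ∫_{[0,1)^d} |f(x+n)|^r dx )^{s/r} )^{1/s}`. -/
def wNorm (d : ℕ) (r s : ℝ≥0∞) (f : EuclideanSpace ℝ (Fin d) → ℂ) : ℝ≥0∞ :=
  lqNorm (Measure.count : Measure (Fin d → ℤ)) s fun n =>
    lqNorm (volume.restrict (unitCube d)) r fun x =>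
      (‖f (x + show EuclideanSpace ℝ (Fin d) from WithLp.toLp 2 fun i => (n i : ℝ))‖₊ : ℝ≥0∞)

/-- Pairing `(x, ω) ∈ ℝ^d × ℝ^d ↦ ℝ^{2d}`. -/
def pairE {d : ℕ} (x ω : EuclideanSpace ℝ (Fin d)) :
    EuclideanSpace ℝ (Fin d ⊕ Fin d) :=
  WithLp.toLp 2 fun i => Sum.elim (fun j => x j) (fun j => ω j) i

/-- First (space) component of a point of `ℝ^{2d}`. -/
def xpart {d : ℕ} (z : EuclideanSpace ℝ (Fin d ⊕ Fin d)) :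
    EuclideanSpace ℝ (Fin d) := WithLp.toLp 2 fun i => z (Sum.inl i)

/-- Second (frequency) component of a point of `ℝ^{2d}`. -/
def wpart {d : ℕ} (z : EuclideanSpace ℝ (Fin d ⊕ Fin d)) :
    EuclideanSpace ℝ (Fin d) := WithLp.toLp 2 fun i => z (Sum.inr i)

/-- Fourier transform `f̂(ω) = ∫ f t e^{-2πi t⬝ω} dt`. -/
def fTrans {ι : Type*} [Fintype ι] (f : EuclideanSpace ℝ ι → ℂ)
    (ω : EuclideanSpace ℝ ι) : ℂ :=
  ∫ t, f t * Complex.exp (Complex.I * (-(2 * Real.pi * (inner ℝ t ω : ℝ))))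

/-- Kohn–Nirenberg operator `a(x,D) f (x) = ∫ a(x,ω) f̂(ω) e^{2πi x⬝ω} dω`. -/
def KNop {d : ℕ} (a : EuclideanSpace ℝ (Fin d ⊕ Fin d) → ℂ)
    (f : EuclideanSpace ℝ (Fin d) → ℂ) (x : EuclideanSpace ℝ (Fin d)) : ℂ :=
  ∫ ω, a (pairE x ω) * fTrans f ω *
    Complex.exp (Complex.I * (2 * Real.pi * (inner ℝ x ω : ℝ)))

/-- Weyl operator `L_σ f (x) = ∫∫ e^{2πi (x-y)⬝ω} σ((x+y)/2, ω) f(y) dy dω`. -/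
def weylOp {d : ℕ} (σ : EuclideanSpace ℝ (Fin d ⊕ Fin d) → ℂ)
    (f : EuclideanSpace ℝ (Fin d) → ℂ) (x : EuclideanSpace ℝ (Fin d)) : ℂ :=
  ∫ y, ∫ ω, Complex.exp (Complex.I * (2 * Real.pi * (inner ℝ (x - y) ω : ℝ))) *
    σ (pairE ((2 : ℝ)⁻¹ • (x + y)) ω) * f y

/-- Cross-Wigner distribution
`W(g,f)(x,ω) = ∫ g(x+t/2) conj(f(x−t/2)) e^{−2πi ω⬝t} dt`. -/
def wigner {d : ℕ} (g f : EuclideanSpace ℝ (Fin d) → ℂ)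
    (z : EuclideanSpace ℝ (Fin d ⊕ Fin d)) : ℂ :=
  ∫ t, g (xpart z + (2 : ℝ)⁻¹ • t) * (starRingEnd ℂ) (f (xpart z - (2 : ℝ)⁻¹ • t)) *
    Complex.exp (Complex.I * (-(2 * Real.pi * (inner ℝ (wpart z) t : ℝ))))

end

/-!
A chirp of rate `-λ` is the boundary value, on the imaginary axis, of a Gaussian of complex width,
so Parseval's formula against that Gaussian (the Fresnel integral) gives
`ĥ_λ(ω) = (iλ)^{-d/2} e^{πi|ω|²/λ} 𝓕⁻¹(ξ ↦ e^{πi|ξ|²/λ} (𝓕⁻¹h)(ξ)) (ω/λ)`.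
For `λ ≥ 1` the remaining chirps have rates in `[0, 1]`, and multiplication by them maps a fixed
Schwartz function into a bounded subset of Schwartz space. Hence
`|ĥ_λ(ω)| ≤ C_N λ^{-d/2} (1 + |ω|/λ)^{-N}` uniformly in `λ`: the transform has height `λ^{-d/2}` and
is concentrated on about `λ^d` unit cubes, so its amalgam norm is at most of order
`λ^{-d/2} λ^{d/q}`.
-/

section TemperateGrowth

open scoped ContDiff
open Metric

variable {E V F : Type*} [NormedAddCommGroup E] [NormedSpace ℝ E] [NormedAddCommGroup V]
  [NormedSpace ℝ V] [NormedAddCommGroup F] [NormedSpace ℝ F]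

lemma iteratedDeriv_cexp_ofReal_mul_I (n : ℕ) :
    iteratedDeriv n (fun t : ℝ ↦ cexp (t * I)) = fun t : ℝ ↦ I ^ n * cexp (t * I) := by
  induction n with
  | zero => simp
  | succ n ih =>
    ext t
    have hderiv : HasDerivAt (fun t : ℝ ↦ cexp (t * I)) (cexp (t * I) * I) t := by
      simpa using ((hasDerivAt_id t).ofReal_comp.mul_const I).cexp
    rw [iteratedDeriv_succ, ih, (hderiv.const_mul (I ^ n)).deriv]
    ring

lemma hasTemperateGrowth_cexp_ofReal_mul_I :
    (fun t : ℝ ↦ cexp (t * I)).HasTemperateGrowth := by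
  refine ⟨(ofRealCLM.contDiff.mul contDiff_const).cexp, fun n ↦ ⟨0, 1, fun t ↦ ?_⟩⟩
  simp [norm_iteratedFDeriv_eq_norm_iteratedDeriv, iteratedDeriv_cexp_ofReal_mul_I,
    norm_exp_ofReal_mul_I]

lemma norm_iteratedFDeriv_comp_prodMk_le {g : E × V → F} (hg : ContDiff ℝ ∞ g)
    (n : ℕ) (a : E) (x : V) :
    ‖iteratedFDeriv ℝ n (fun y ↦ g (a, y)) x‖ ≤ ‖iteratedFDeriv ℝ n g (a, x)‖ := by
  have hslice : (fun y ↦ g (a, y)) = (fun z ↦ g (z + (a, 0))) ∘ ContinuousLinearMap.inr ℝ E V := by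
    ext y
    simp
  have hshift : ContDiff ℝ ∞ (fun z ↦ g (z + (a, 0))) := hg.comp (by fun_prop)
  rw [hslice, ContinuousLinearMap.iteratedFDeriv_comp_right _ hshift _ (mod_cast le_top),
    iteratedFDeriv_comp_add_right]
  refine (ContinuousMultilinearMap.norm_compContinuousLinearMap_le _ _).trans ?_
  refine (mul_le_of_le_one_right (norm_nonneg _) (Finset.prod_le_one (fun _ _ ↦ norm_nonneg _)
    fun _ _ ↦ ContinuousLinearMap.norm_inr_le_one ℝ E V)).trans_eq ?_
  simp

lemma exists_norm_iteratedFDeriv_comp_prodMk_le {g : E × V → F}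
    (hg : g.HasTemperateGrowth) (N : ℕ) (R : ℝ) :
    ∃ (k : ℕ) (C : ℝ), 0 ≤ C ∧ ∀ a ∈ closedBall (0 : E) R, ∀ n ≤ N, ∀ x : V,
      ‖iteratedFDeriv ℝ n (fun y ↦ g (a, y)) x‖ ≤ C * (1 + ‖x‖) ^ k := by
  obtain ⟨k, C, hC, hbound⟩ := hg.norm_iteratedFDeriv_le_uniform N
  refine ⟨k, C * (1 + |R|) ^ k, by positivity, fun a ha n hn x ↦ ?_⟩
  have hax : 1 + ‖(a, x)‖ ≤ (1 + |R|) * (1 + ‖x‖) := by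
    have haR : ‖a‖ ≤ |R| := (mem_closedBall_zero_iff.1 ha).trans (le_abs_self R)
    have hmax : ‖(a, x)‖ ≤ ‖a‖ + ‖x‖ := max_le_add_of_nonneg (norm_nonneg a) (norm_nonneg x)
    nlinarith [mul_nonneg (abs_nonneg R) (norm_nonneg x)]
  calc ‖iteratedFDeriv ℝ n (fun y ↦ g (a, y)) x‖
      ≤ ‖iteratedFDeriv ℝ n g (a, x)‖ := norm_iteratedFDeriv_comp_prodMk_le hg.1 n a x
    _ ≤ C * (1 + ‖(a, x)‖) ^ k := hbound n hn _
    _ ≤ C * ((1 + |R|) * (1 + ‖x‖)) ^ k := by gcongr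
    _ = C * (1 + |R|) ^ k * (1 + ‖x‖) ^ k := by rw [mul_pow, mul_assoc]

lemma hasTemperateGrowth_comp_prodMk {g : E × V → F}
    (hg : g.HasTemperateGrowth) (a : E) : (fun x ↦ g (a, x)).HasTemperateGrowth := by
  refine ⟨hg.1.comp (by fun_prop), fun n ↦ ?_⟩
  obtain ⟨k, C, -, hbound⟩ := exists_norm_iteratedFDeriv_comp_prodMk_le hg n ‖a‖
  exact ⟨k, C, hbound a (by simp) n le_rfl⟩

end TemperateGrowth

section BoundedSets

open Bornology Metric

variable {E V F : Type*} [NormedAddCommGroup E] [NormedSpace ℝ E] [NormedAddCommGroup V]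
  [NormedSpace ℝ V] [NormedAddCommGroup F] [NormedSpace ℂ F]

lemma exists_pow_mul_norm_iteratedFDeriv_le_of_isVonNBounded
    {S : Set 𝓢(V, F)} (hS : IsVonNBounded ℂ S) (k N : ℕ) :
    ∃ C : ℝ, 0 < C ∧ ∀ f ∈ S, ∀ n ≤ N, ∀ x, (1 + ‖x‖) ^ k * ‖iteratedFDeriv ℝ n f x‖ ≤ C := by
  obtain ⟨r, hr, hbound⟩ := (schwartz_withSeminorms ℂ V
    F).isVonNBounded_iff_finset_seminorm_bounded.1 hS (Finset.Iic (k, N))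
  refine ⟨2 ^ k * r, by positivity, fun f hf n hn x ↦ ?_⟩
  calc (1 + ‖x‖) ^ k * ‖iteratedFDeriv ℝ n f x‖
      ≤ 2 ^ k * (Finset.Iic (k, N)).sup (schwartzSeminormFamily ℂ V F) f :=
        one_add_le_sup_seminorm_apply (m := (k, N)) le_rfl hn f x
    _ ≤ 2 ^ k * r := by gcongr; exact (hbound f hf).le

lemma isVonNBounded_of_pow_mul_norm_iteratedFDeriv_le {S : Set 𝓢(V, F)}
    (hS : ∀ k n : ℕ, ∃ C : ℝ, 0 ≤ C ∧ ∀ f ∈ S, ∀ x, ‖x‖ ^ k * ‖iteratedFDeriv ℝ n f x‖ ≤ C) :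
    IsVonNBounded ℂ S := by
  refine (schwartz_withSeminorms ℂ V F).isVonNBounded_iff_seminorm_bounded.2 fun ⟨k, n⟩ ↦ ?_
  obtain ⟨C, hC, hbound⟩ := hS k n
  refine ⟨C + 1, by positivity, fun f hf ↦ ?_⟩
  exact (SchwartzMap.seminorm_le_bound ℂ k n f hC (hbound f hf)).trans_lt (lt_add_one C)

lemma isVonNBounded_image_smulLeftCLM_comp_prodMk {g : E × V → ℂ}
    (hg : g.HasTemperateGrowth) (f : 𝓢(V, F)) (R : ℝ) :
    IsVonNBounded ℂ
      ((fun a ↦ smulLeftCLM F (fun x ↦ g (a, x)) f) '' closedBall (0 : E) R) := by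
  refine isVonNBounded_of_pow_mul_norm_iteratedFDeriv_le fun k n ↦ ?_
  obtain ⟨l, C, hC, hgC⟩ := exists_norm_iteratedFDeriv_comp_prodMk_le hg n R
  obtain ⟨D, hD, hfD⟩ := exists_pow_mul_norm_iteratedFDeriv_le_of_isVonNBounded
    (isVonNBounded_singleton f) (k + l) n
  refine ⟨∑ i ∈ Finset.range (n + 1), n.choose i * (C * D), by positivity,
    Set.forall_mem_image.2 fun a ha x ↦ ?_⟩
  have hga := hasTemperateGrowth_comp_prodMk hg a
  rw [smulLeftCLM_apply hga f]
  refine (mul_le_mul_of_nonneg_left (norm_iteratedFDeriv_smul_le hga.1 (f.smooth ⊤) x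
    (mod_cast le_top)) (by positivity)).trans ?_
  rw [Finset.mul_sum]
  refine Finset.sum_le_sum fun i hi ↦ ?_
  have hi : i ≤ n := Finset.mem_range_succ_iff.1 hi
  calc ‖x‖ ^ k * (n.choose i * ‖iteratedFDeriv ℝ i (fun x ↦ g (a, x)) x‖ *
        ‖iteratedFDeriv ℝ (n - i) f x‖)
      ≤ (1 + ‖x‖) ^ k * (n.choose i * (C * (1 + ‖x‖) ^ l) * ‖iteratedFDeriv ℝ (n - i) f x‖) := by
        gcongr
        · exact le_add_of_nonneg_left zero_le_one
        · exact hgC a ha i hi x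
    _ = n.choose i * (C * ((1 + ‖x‖) ^ (k + l) * ‖iteratedFDeriv ℝ (n - i) f x‖)) := by ring
    _ ≤ n.choose i * (C * D) := by gcongr; exact hfD f rfl _ (n.sub_le i) x

end BoundedSets

section Fresnel

open scoped Real FourierTransform RealInnerProductSpace

/-- The chirp `x ↦ exp(πit|x|²)` of rate `t`. The modulating factor of `h_λ` is the chirp of rate
`-λ`; its Fourier transform is a multiple of the chirp of rate `λ⁻¹`. -/
noncomputable def chirp {V : Type*} [Norm V] (t : ℝ) (x : V) : ℂ :=
  cexp ((π * t * ‖x‖ ^ 2 : ℝ) * I)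

lemma norm_chirp {V : Type*} [Norm V] (t : ℝ) (x : V) : ‖chirp t x‖ = 1 :=
  norm_exp_ofReal_mul_I _

variable {V : Type*} [NormedAddCommGroup V] [InnerProductSpace ℝ V]

lemma hasTemperateGrowth_chirp :
    (fun z : ℝ × V ↦ chirp z.1 z.2).HasTemperateGrowth := by
  have hfst : (fun z : ℝ × V ↦ z.1).HasTemperateGrowth :=
    (ContinuousLinearMap.fst ℝ ℝ V).hasTemperateGrowth
  have hsq : (fun z : ℝ × V ↦ ‖z.2‖ ^ 2).HasTemperateGrowth :=
    (Function.hasTemperateGrowth_norm_sq V).comp (ContinuousLinearMap.snd ℝ ℝ V).hasTemperateGrowth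
  exact hasTemperateGrowth_cexp_ofReal_mul_I.comp (((Function.HasTemperateGrowth.const π).mul
    hfst).mul hsq)

lemma re_ofReal_div_nonneg {r : ℝ} (hr : 0 ≤ r) {z : ℂ} (hz : 0 ≤ z.re) : 0 ≤ (r / z).re := by
  rw [div_eq_mul_inv, re_ofReal_mul, inv_re]
  have := normSq_nonneg z
  positivity

lemma mem_slitPlane_of_re_nonneg {z : ℂ} (hz : 0 ≤ z.re) (hz0 : z ≠ 0) : z ∈ slitPlane := by
  rw [mem_slitPlane_iff_not_le_zero]
  exact fun hle ↦ hz0 (Complex.ext ((Complex.le_def.1 hle).1.antisymm hz) (Complex.le_def.1 hle).2)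

lemma continuousOn_integral_mul_cexp_neg_mul {α : Type*} [MeasurableSpace α] {ν : Measure α}
    {f : α → ℂ} (hf : Integrable f ν) {g : α → ℝ} (hg : AEMeasurable g ν) (hg0 : 0 ≤ g) :
    ContinuousOn (fun b : ℂ ↦ ∫ x, f x * cexp (-b * g x) ∂ν) {b | 0 ≤ b.re} := by
  refine continuousOn_of_dominated (bound := fun x ↦ ‖f x‖) (fun b _ ↦ ?_) (fun b hb ↦ ?_)
    hf.norm (.of_forall fun x ↦ by fun_prop)
  · exact hf.1.mul (by fun_prop : AEMeasurable _ ν).aestronglyMeasurable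
  · refine .of_forall fun x ↦ ?_
    have hexp : ‖cexp (-b * g x)‖ ≤ 1 := by
      rw [norm_exp, Real.exp_le_one_iff, re_mul_ofReal, neg_re]
      exact mul_nonpos_of_nonpos_of_nonneg (neg_nonpos.2 hb) (hg0 x)
    simpa using mul_le_of_le_one_right (norm_nonneg (f x)) hexp

variable [FiniteDimensional ℝ V] [MeasurableSpace V] [BorelSpace V]

lemma integral_fourier_mul_gaussian_of_re_pos {f : V → ℂ} (hf : Integrable f) {b : ℂ}
    (hb : 0 < b.re) (c : V) :
    ∫ x, 𝓕 f x * cexp (2 * π * I * ⟪c, x⟫) * cexp (-b * ‖x‖ ^ 2) =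
      (π / b) ^ (Module.finrank ℝ V / 2 : ℂ) *
        ∫ ξ, f ξ * cexp (-(π ^ 2 / b) * ‖c - ξ‖ ^ 2) := by
  have hparseval := VectorFourier.integral_fourierIntegral_smul_eq_flip (L := innerₗ V)
    (μ := volume) (ν := volume) Real.continuous_fourierChar continuous_inner hf
    (GaussianFourier.integrable_cexp_neg_mul_sq_norm_add hb (2 * π * I) c)
  rw [flip_innerₗ] at hparseval
  calc ∫ x, 𝓕 f x * cexp (2 * π * I * ⟪c, x⟫) * cexp (-b * ‖x‖ ^ 2)
      = ∫ x, 𝓕 f x * cexp (-b * ‖x‖ ^ 2 + 2 * π * I * ⟪c, x⟫) := by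
        simp_rw [mul_assoc (𝓕 f _), ← Complex.exp_add, add_comm]
    _ = ∫ ξ, f ξ * 𝓕 (fun v : V ↦ cexp (-b * ‖v‖ ^ 2 + 2 * π * I * ⟪c, v⟫)) ξ := hparseval
    _ = _ := by
        simp_rw [fourier_gaussian_innerProductSpace' hb, ← integral_const_mul]
        congr with ξ
        ring_nf

lemma integral_fourier_mul_gaussian {f : V → ℂ} (hf : Integrable f) (hf' : Integrable (𝓕 f))
    {b : ℂ} (hb : 0 ≤ b.re) (hb0 : b ≠ 0) (c : V) :
    ∫ x, 𝓕 f x * cexp (2 * π * I * ⟪c, x⟫) * cexp (-b * ‖x‖ ^ 2) =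
      (π / b) ^ (Module.finrank ℝ V / 2 : ℂ) *
        ∫ ξ, f ξ * cexp (-(π ^ 2 / b) * ‖c - ξ‖ ^ 2) := by
  -- Both sides are continuous in `b` on `S` and agree on its dense subset `0 < re b`.
  let S : Set ℂ := {z | 0 ≤ z.re ∧ z ≠ 0}
  have hdiv (r : ℝ) : ContinuousOn (fun z : ℂ ↦ r / z) S :=
    continuousOn_const.div continuousOn_id fun z hz ↦ hz.2
  have hleft : ContinuousOn
      (fun z : ℂ ↦ ∫ x, 𝓕 f x * cexp (2 * π * I * ⟪c, x⟫) * cexp (-z * ‖x‖ ^ 2)) S := by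
    have hphase : Integrable fun x ↦ 𝓕 f x * cexp (2 * π * I * ⟪c, x⟫) :=
      hf'.mul_bdd (c := 1) (by fun_prop) (.of_forall fun x ↦ by simp [norm_exp])
    refine ((continuousOn_integral_mul_cexp_neg_mul hphase (g := fun x ↦ ‖x‖ ^ 2)
      (by fun_prop) fun x ↦ sq_nonneg _).mono fun z hz ↦ hz.1).congr fun z _ ↦ ?_
    simp only [Complex.ofReal_pow]
  have hright : ContinuousOn (fun z : ℂ ↦ ∫ ξ, f ξ * cexp (-(π ^ 2 / z) * ‖c - ξ‖ ^ 2)) S := by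
    refine ((continuousOn_integral_mul_cexp_neg_mul hf (g := fun ξ ↦ ‖c - ξ‖ ^ 2)
      (by fun_prop) fun ξ ↦ sq_nonneg _).comp (hdiv (π ^ 2)) fun z hz ↦
        re_ofReal_div_nonneg (sq_nonneg π) hz.1).congr fun z _ ↦ ?_
    simp only [Function.comp_apply, Complex.ofReal_pow]
  have hpow : ContinuousOn (fun z : ℂ ↦ (π / z) ^ (Module.finrank ℝ V / 2 : ℂ)) S :=
    (hdiv π).cpow continuousOn_const fun z hz ↦ mem_slitPlane_of_re_nonneg
      (re_ofReal_div_nonneg Real.pi_pos.le hz.1) (div_ne_zero (mod_cast Real.pi_ne_zero) hz.2)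
  have hre_pos : Set.EqOn _ _ {z : ℂ | 0 < z.re} := fun z hz ↦
    integral_fourier_mul_gaussian_of_re_pos hf hz c
  refine hre_pos.of_subset_closure hleft (hpow.mul hright)
    (fun z hz ↦ ⟨le_of_lt hz, ne_of_apply_ne re (ne_of_gt hz)⟩) (fun z hz ↦ ?_) ⟨hb, hb0⟩
  rw [closure_setOfPred_lt_re]
  exact hz.1

lemma fourier_fourier_mul_chirp {f : V → ℂ} (hf : Integrable f) (hf' : Integrable (𝓕 f))
    {lam : ℝ} (hlam : lam ≠ 0) (ω : V) :
    𝓕 (fun x ↦ 𝓕 f x * chirp (-lam) x) ω =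
      (1 / (lam * I)) ^ (Module.finrank ℝ V / 2 : ℂ) *
        (chirp lam⁻¹ ω * 𝓕⁻ (fun ξ ↦ chirp lam⁻¹ ξ * f ξ) (lam⁻¹ • ω)) := by
  have hb : (π : ℂ) * lam * I ≠ 0 := by simp [Real.pi_ne_zero, hlam]
  have hpi : (π : ℂ) ≠ 0 := mod_cast Real.pi_ne_zero
  have hlam' : (lam : ℂ) ≠ 0 := mod_cast hlam
  have hleft (x : V) : cexp (↑(-2 * π * ⟪x, ω⟫) * I) • (𝓕 f x * chirp (-lam) x) =
      𝓕 f x * cexp (2 * π * I * ⟪-ω, x⟫) * cexp (-(π * lam * I) * ‖x‖ ^ 2) := by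
    rw [chirp, smul_eq_mul, inner_neg_left, real_inner_comm x ω, mul_left_comm, mul_assoc]
    push_cast
    ring_nf
  have hright (ξ : V) : f ξ * cexp (-(π ^ 2 / (π * lam * I)) * ‖-ω - ξ‖ ^ 2) =
      chirp lam⁻¹ ω * (cexp (↑(2 * π * ⟪ξ, lam⁻¹ • ω⟫) * I) • (chirp lam⁻¹ ξ * f ξ)) := by
    have hnorm : (‖-ω - ξ‖ : ℂ) ^ 2 = ‖ω‖ ^ 2 + 2 * ⟪ξ, ω⟫ + ‖ξ‖ ^ 2 := by
      rw [← neg_add', norm_neg, real_inner_comm]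
      exact_mod_cast norm_add_sq_real ω ξ
    have hcoef : -((π : ℂ) ^ 2 / (π * lam * I)) = π * lam⁻¹ * I := by
      push_cast
      field_simp
      simp
    have hexp : cexp (-(π ^ 2 / (π * lam * I)) * ‖-ω - ξ‖ ^ 2) =
        chirp lam⁻¹ ω * (cexp (↑(2 * π * ⟪ξ, lam⁻¹ • ω⟫) * I) * chirp lam⁻¹ ξ) := by
      rw [hnorm, hcoef, chirp, chirp, real_inner_smul_right, ← Complex.exp_add, ← Complex.exp_add]
      congr 1
      push_cast
      ring
    rw [hexp, smul_eq_mul]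
    ring
  rw [Real.fourier_eq', Real.fourierInv_eq', ← integral_const_mul]
  simp_rw [hleft, ← hright]
  rw [integral_fourier_mul_gaussian hf hf' (by simp) hb, mul_assoc, ← div_div, div_self hpi]

lemma norm_fourier_fourier_mul_chirp {f : V → ℂ} (hf : Integrable f) (hf' : Integrable (𝓕 f))
    {lam : ℝ} (hlam : 0 < lam) (ω : V) :
    ‖𝓕 (fun x ↦ 𝓕 f x * chirp (-lam) x) ω‖ =
      lam ^ (-(Module.finrank ℝ V / 2) : ℝ) *
        ‖𝓕⁻ (fun ξ ↦ chirp lam⁻¹ ξ * f ξ) (lam⁻¹ • ω)‖ := by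
  have hpow : ‖(1 / (lam * I)) ^ (Module.finrank ℝ V / 2 : ℂ)‖ =
      lam ^ (-(Module.finrank ℝ V / 2) : ℝ) := by
    rw [Real.rpow_neg hlam.le, ← Real.inv_rpow hlam.le]
    simpa [abs_of_pos hlam] using norm_cpow_real (1 / (lam * I)) (Module.finrank ℝ V / 2 : ℝ)
  rw [fourier_fourier_mul_chirp hf hf' hlam.ne', norm_mul, norm_mul, hpow, norm_chirp, one_mul]

lemma exists_norm_fourierInv_chirp_mul_le (f : 𝓢(V, ℂ)) (N : ℕ) :
    ∃ C : ℝ, 0 < C ∧ ∀ t : ℝ, |t| ≤ 1 → ∀ w : V,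
      ‖𝓕⁻ (fun x ↦ chirp t x * f x) w‖ ≤ C * ((1 + ‖w‖) ^ N)⁻¹ := by
  have hbdd := (isVonNBounded_image_smulLeftCLM_comp_prodMk
    (hasTemperateGrowth_chirp (V := V)) f 1).image (FourierTransform.fourierInvCLM ℂ 𝓢(V, ℂ))
  obtain ⟨C, hC, hbound⟩ := exists_pow_mul_norm_iteratedFDeriv_le_of_isVonNBounded hbdd N 0
  refine ⟨C, hC, fun t ht w ↦ ?_⟩
  have hw := hbound _ (Set.mem_image_of_mem _ (Set.mem_image_of_mem _ (by simpa using ht)))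
    0 le_rfl w
  rw [norm_iteratedFDeriv_zero, FourierTransform.fourierInvCLM_apply, fourierInv_coe,
    smulLeftCLM_apply (hasTemperateGrowth_comp_prodMk hasTemperateGrowth_chirp t)] at hw
  rwa [← div_eq_mul_inv, le_div_iff₀' (by positivity)]

lemma exists_norm_fourier_mul_chirp_le (h : 𝓢(V, ℂ)) (N : ℕ) :
    ∃ C : ℝ, 0 < C ∧ ∀ lam : ℝ, 1 ≤ lam → ∀ ω : V,
      ‖𝓕 (fun x ↦ h x * chirp (-lam) x) ω‖ ≤
        C * lam ^ (-(Module.finrank ℝ V / 2) : ℝ) * ((1 + lam⁻¹ * ‖ω‖) ^ N)⁻¹ := by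
  obtain ⟨C, hC, hbound⟩ := exists_norm_fourierInv_chirp_mul_le (𝓕⁻ h) N
  refine ⟨C, hC, fun lam hlam ω ↦ ?_⟩
  have hlam0 : 0 < lam := one_pos.trans_le hlam
  have hinv : 0 ≤ lam⁻¹ := inv_nonneg.2 hlam0.le
  have hfourier : 𝓕 ((𝓕⁻ h : 𝓢(V, ℂ)) : V → ℂ) = h := by
    rw [← fourier_coe, FourierTransform.fourier_fourierInv_eq]
  have hscaled := hbound lam⁻¹ (by simpa [abs_of_nonneg hinv] using inv_le_one_of_one_le₀ hlam)
    (lam⁻¹ • ω)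
  rw [norm_smul, Real.norm_of_nonneg hinv] at hscaled
  have hfresnel := norm_fourier_fourier_mul_chirp (𝓕⁻ h).integrable
    (hfourier ▸ h.integrable) hlam0 ω
  rw [hfourier] at hfresnel
  rw [hfresnel, mul_comm C, mul_assoc]
  gcongr

end Fresnel

section MixedNorms

variable {α : Type*} [MeasurableSpace α]

lemma lqNorm_eq_eLpNorm (μ : Measure α) {p : ℝ≥0∞} (hp : p ≠ 0) (f : α → ℝ≥0∞) :
    lqNorm μ p f = eLpNorm f p μ := by
  rcases eq_or_ne p ∞ with rfl | hp_top
  · simp [lqNorm, eLpNormEssSup]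
  · simp [lqNorm, hp_top, eLpNorm_eq_lintegral_rpow_enorm_toReal hp hp_top]

lemma tsum_pi_prod_le_prod_tsum {ι : Type*} [Fintype ι] {β : ι → Type*}
    (f : ∀ i, β i → ℝ≥0∞) : ∑' x : ∀ i, β i, ∏ i, f i (x i) ≤ ∏ i, ∑' b, f i b := by
  classical
  rw [ENNReal.tsum_eq_iSup_sum]
  refine iSup_le fun s ↦ ?_
  let proj (i : ι) : Finset (β i) := s.image fun x ↦ x i
  calc ∑ x ∈ s, ∏ i, f i (x i)
      ≤ ∑ x ∈ Fintype.piFinset proj, ∏ i, f i (x i) :=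
        Finset.sum_le_sum_of_subset fun x hx ↦ Fintype.mem_piFinset.2 fun i ↦
          Finset.mem_image_of_mem (fun x ↦ x i) hx
    _ = ∏ i, ∑ b ∈ proj i, f i b := (Finset.prod_univ_sum proj f).symm
    _ ≤ ∏ i, ∑' b, f i b := Finset.prod_le_prod' fun i _ ↦ ENNReal.sum_le_tsum _

lemma eLpNorm_count_eq_tsum [MeasurableSingletonClass α] {F : Type*} [ENorm F] {q : ℝ≥0∞}
    (hq : q ≠ 0) (hq_top : q ≠ ∞) (f : α → F) :
    eLpNorm f q .count = (∑' a, ‖f a‖ₑ ^ q.toReal) ^ q.toReal⁻¹ := by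
  rw [eLpNorm_eq_lintegral_rpow_enorm_toReal hq hq_top, lintegral_count, one_div]

lemma eLpNorm_count_pi_prod_le {ι : Type*} [Fintype ι] {β : ι → Type*}
    [∀ i, MeasurableSpace (β i)] [∀ i, MeasurableSingletonClass (β i)] {𝕜 : Type*} [NormedField 𝕜]
    (f : ∀ i, β i → 𝕜) {q : ℝ≥0∞} (hq : q ≠ 0) :
    eLpNorm (fun x : ∀ i, β i ↦ ∏ i, f i (x i)) q .count ≤ ∏ i, eLpNorm (f i) q .count := by
  have henorm (x : ∀ i, β i) : ‖∏ i, f i (x i)‖ₑ = ∏ i, ‖f i (x i)‖ₑ := by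
    simp [enorm_eq_nnnorm, nnnorm_prod]
  rcases eq_or_ne q ∞ with rfl | hq_top
  · simp only [eLpNorm_exponent_top, eLpNormEssSup_count, henorm]
    exact iSup_le fun x ↦ Finset.prod_le_prod' fun i _ ↦ le_iSup (fun b ↦ ‖f i b‖ₑ) (x i)
  · simp only [eLpNorm_count_eq_tsum hq hq_top, henorm,
      ← ENNReal.prod_rpow_of_nonneg ENNReal.toReal_nonneg]
    rw [ENNReal.prod_rpow_of_nonneg (inv_nonneg.2 ENNReal.toReal_nonneg)]
    gcongr
    exact tsum_pi_prod_le_prod_tsum fun i b ↦ ‖f i b‖ₑ ^ q.toReal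

end MixedNorms

section LatticeSums

variable {lam : ℝ}

lemma sum_range_inv_sq_le (hlam : 0 < lam) (n : ℕ) :
    ∑ k ∈ Finset.range n, ((1 + lam⁻¹ * (k + 1)) ^ 2)⁻¹ ≤ lam := by
  let u (k : ℕ) : ℝ := (1 + lam⁻¹ * k)⁻¹
  have htelescope (k : ℕ) : ((1 + lam⁻¹ * (k + 1)) ^ 2)⁻¹ ≤ lam * (u k - u (k + 1)) := by
    have hu : lam * (u k - u (k + 1)) = (1 + lam⁻¹ * k)⁻¹ * (1 + lam⁻¹ * (k + 1))⁻¹ := by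
      simp only [u, Nat.cast_add, Nat.cast_one]
      field_simp
      ring
    rw [hu, sq, mul_inv]
    gcongr
    linarith
  calc ∑ k ∈ Finset.range n, ((1 + lam⁻¹ * (k + 1)) ^ 2)⁻¹
      ≤ ∑ k ∈ Finset.range n, lam * (u k - u (k + 1)) :=
        Finset.sum_le_sum fun k _ ↦ htelescope k
    _ = lam * (1 - u n) := by
        rw [← Finset.mul_sum, Finset.sum_range_sub']
        simp [u]
    _ ≤ lam := mul_le_of_le_one_right hlam.le (sub_le_self 1 (by positivity))

lemma tsum_int_ofReal_inv_sq_le (hlam : 1 ≤ lam) :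
    ∑' k : ℤ, ENNReal.ofReal ((1 + lam⁻¹ * |(k : ℝ)|) ^ 2)⁻¹ ≤ ENNReal.ofReal (3 * lam) := by
  have hlam0 : 0 < lam := one_pos.trans_le hlam
  have hnat : ∑' k : ℕ, ENNReal.ofReal ((1 + lam⁻¹ * (k + 1)) ^ 2)⁻¹ ≤ ENNReal.ofReal lam := by
    refine ENNReal.tsum_le_of_sum_range_le fun n ↦ ?_
    rw [← ENNReal.ofReal_sum_of_nonneg fun _ _ ↦ by positivity]
    exact ENNReal.ofReal_le_ofReal (sum_range_inv_sq_le hlam0 n)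
  have habs (k : ℕ) : |((k : ℝ) + 1)| = k + 1 := abs_of_nonneg (by positivity)
  rw [tsum_of_add_one_of_neg_add_one ENNReal.summable ENNReal.summable]
  push_cast
  simp_rw [abs_neg, habs]
  calc _ ≤ ENNReal.ofReal lam + ENNReal.ofReal lam + ENNReal.ofReal lam := by
        gcongr
        simpa using hlam
    _ = ENNReal.ofReal (3 * lam) := by
        rw [← ENNReal.ofReal_add hlam0.le hlam0.le, ← ENNReal.ofReal_add (by positivity) hlam0.le]
        ring_nf

lemma eLpNorm_count_inv_pow_le (hlam : 1 ≤ lam) {m : ℕ} {q : ℝ≥0∞} (hmq : 2 ≤ m * q) :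
    eLpNorm (fun k : ℤ ↦ ((1 + lam⁻¹ * |(k : ℝ)|) ^ m)⁻¹) q .count ≤
      ENNReal.ofReal ((3 * lam) ^ invR q) := by
  have : 0 < lam := one_pos.trans_le hlam
  have hq : q ≠ 0 := right_ne_zero_of_mul (two_pos.trans_le hmq).ne'
  have hbase (k : ℤ) : 1 ≤ 1 + lam⁻¹ * |(k : ℝ)| := le_add_of_nonneg_right (by positivity)
  rcases eq_or_ne q ∞ with rfl | hq_top
  · simp only [eLpNorm_exponent_top, eLpNormEssSup_count, invR, inv_top, toReal_zero,
      Real.rpow_zero, ENNReal.ofReal_one]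
    refine iSup_le fun k ↦ ?_
    rw [Real.enorm_of_nonneg (by positivity), ENNReal.ofReal_le_one]
    exact inv_le_one_of_one_le₀ (one_le_pow₀ (hbase k))
  · have hmq' : 2 ≤ m * q.toReal := by
      simpa using ENNReal.toReal_mono (by finiteness) hmq
    have hterm (k : ℤ) : ‖((1 + lam⁻¹ * |(k : ℝ)|) ^ m)⁻¹‖ₑ ^ q.toReal ≤
        ENNReal.ofReal ((1 + lam⁻¹ * |(k : ℝ)|) ^ 2)⁻¹ := by
      have hk := one_pos.trans_le (hbase k)
      rw [Real.enorm_of_nonneg (by positivity), ENNReal.ofReal_rpow_of_pos (by positivity),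
        Real.inv_rpow (by positivity), ← Real.rpow_natCast, ← Real.rpow_mul hk.le,
        ← Real.rpow_natCast]
      gcongr
      · exact hbase k
      · exact_mod_cast hmq'
    rw [eLpNorm_count_eq_tsum hq hq_top, ← ENNReal.ofReal_rpow_of_pos (by positivity), invR,
      ENNReal.toReal_inv]
    gcongr
    exact (ENNReal.tsum_le_tsum hterm).trans (tsum_int_ofReal_inv_sq_le hlam)

end LatticeSums

section WienerAmalgam

open scoped Real FourierTransform

variable {d : ℕ}

lemma unitCube_eq_preimage_pi (d : ℕ) :
    unitCube d = WithLp.ofLp ⁻¹' Set.univ.pi fun _ : Fin d ↦ Set.Ico (0 : ℝ) 1 := by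
  ext x
  simp [unitCube]

lemma measurableSet_unitCube (d : ℕ) : MeasurableSet (unitCube d) := by
  rw [unitCube_eq_preimage_pi]
  exact (PiLp.volume_preserving_ofLp (Fin d)).measurable (.univ_pi fun _ ↦ measurableSet_Ico)

lemma volume_unitCube (d : ℕ) : volume (unitCube d) = 1 := by
  rw [unitCube_eq_preimage_pi, (PiLp.volume_preserving_ofLp (Fin d)).measure_preimage
    (MeasurableSet.univ_pi fun _ ↦ measurableSet_Ico).nullMeasurableSet, Real.volume_pi_Ico]
  simp

lemma lqNorm_restrict_unitCube_le {p : ℝ≥0∞} (hp : p ≠ 0) {f : EuclideanSpace ℝ (Fin d) → ℝ≥0∞}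
    {B : ℝ≥0∞} (hf : ∀ x ∈ unitCube d, f x ≤ B) :
    lqNorm (volume.restrict (unitCube d)) p f ≤ B := by
  rw [lqNorm_eq_eLpNorm _ hp]
  refine (eLpNorm_le_of_ae_enorm_bound
    (ae_restrict_of_forall_mem (measurableSet_unitCube d) hf)).trans_eq ?_
  simp [volume_unitCube]

lemma inv_one_add_mul_norm_add_lattice_le {r : ℝ} (hr0 : 0 ≤ r) (hr1 : r ≤ 1)
    {x : EuclideanSpace ℝ (Fin d)} (hx : x ∈ unitCube d) (n : Fin d → ℤ) (i : Fin d) :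
    (1 + r * ‖x + WithLp.toLp 2 fun i ↦ (n i : ℝ)‖)⁻¹ ≤ 2 * (1 + r * |(n i : ℝ)|)⁻¹ := by
  set y := x + WithLp.toLp 2 fun i ↦ (n i : ℝ) with hy
  have hn : |(n i : ℝ)| ≤ ‖y‖ + 1 :=
    calc |(n i : ℝ)| = |y i - x i| := by simp [hy]
      _ ≤ |y i| + |x i| := abs_sub _ _
      _ ≤ ‖y‖ + 1 := add_le_add (PiLp.norm_apply_le y i)
        ((abs_of_nonneg (hx i).1).trans_le (hx i).2.le)
  have hbase : 1 + r * |(n i : ℝ)| ≤ 2 * (1 + r * ‖y‖) := by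
    nlinarith [mul_le_mul_of_nonneg_left hn hr0, mul_nonneg hr0 (norm_nonneg y)]
  rw [← div_eq_mul_inv, inv_le_comm₀ (by positivity) (by positivity), inv_div]
  exact (div_le_iff₀' two_pos).2 hbase

lemma inv_one_add_mul_norm_add_lattice_pow_le {r : ℝ} (hr0 : 0 ≤ r) (hr1 : r ≤ 1)
    {x : EuclideanSpace ℝ (Fin d)} (hx : x ∈ unitCube d) (n : Fin d → ℤ) (m : ℕ) :
    ((1 + r * ‖x + WithLp.toLp 2 fun i ↦ (n i : ℝ)‖) ^ (m * d))⁻¹ ≤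
      2 ^ (m * d) * ∏ i, ((1 + r * |(n i : ℝ)|) ^ m)⁻¹ := by
  set y := x + WithLp.toLp 2 fun i ↦ (n i : ℝ)
  calc ((1 + r * ‖y‖) ^ (m * d))⁻¹
      = ∏ _i : Fin d, (1 + r * ‖y‖)⁻¹ ^ m := by simp [pow_mul]
    _ ≤ ∏ i, (2 * (1 + r * |(n i : ℝ)|)⁻¹) ^ m := by
        gcongr with i
        exact inv_one_add_mul_norm_add_lattice_le hr0 hr1 hx n i
    _ = 2 ^ (m * d) * ∏ i, ((1 + r * |(n i : ℝ)|) ^ m)⁻¹ := by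
        simp [mul_pow, Finset.prod_mul_distrib, pow_mul]

lemma wNorm_le_eLpNorm_count {p q : ℝ≥0∞} (hp : p ≠ 0) (hq : q ≠ 0)
    {f : EuclideanSpace ℝ (Fin d) → ℂ} {W : (Fin d → ℤ) → ℝ}
    (hf : ∀ n, ∀ x ∈ unitCube d, ‖f (x + WithLp.toLp 2 fun i ↦ (n i : ℝ))‖ ≤ W n) :
    wNorm d p q f ≤ eLpNorm W q .count := by
  rw [wNorm, lqNorm_eq_eLpNorm _ hq]
  refine eLpNorm_mono_enorm fun n ↦ lqNorm_restrict_unitCube_le hp fun x hx ↦ ?_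
  exact enorm_le_iff_norm_le.2 ((hf n x hx).trans (le_abs_self _))

lemma wNorm_le_of_decay {p q : ℝ≥0∞} (hp : p ≠ 0) {m : ℕ} (hmq : 2 ≤ m * q)
    {lam A : ℝ} (hlam : 1 ≤ lam) {f : EuclideanSpace ℝ (Fin d) → ℂ}
    (hf : ∀ ω, ‖f ω‖ ≤ A * ((1 + lam⁻¹ * ‖ω‖) ^ (m * d))⁻¹) :
    wNorm d p q f ≤ ENNReal.ofReal (A * 2 ^ (m * d) * (3 * lam) ^ (d * invR q)) := by
  have : 0 < lam := one_pos.trans_le hlam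
  have hq : q ≠ 0 := right_ne_zero_of_mul (two_pos.trans_le hmq).ne'
  have hA : 0 ≤ A := by simpa using (norm_nonneg _).trans (hf 0)
  let w (k : ℤ) : ℝ := ((1 + lam⁻¹ * |(k : ℝ)|) ^ m)⁻¹
  let W (n : Fin d → ℤ) : ℝ := ∏ i, w (n i)
  have hcube (n : Fin d → ℤ) (x) (hx : x ∈ unitCube d) :
      ‖f (x + WithLp.toLp 2 fun i ↦ (n i : ℝ))‖ ≤ ((A * 2 ^ (m * d)) • W) n := by
    refine (hf _).trans ?_
    rw [Pi.smul_apply, smul_eq_mul, mul_assoc]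
    gcongr
    exact inv_one_add_mul_norm_add_lattice_pow_le (by positivity) (inv_le_one_of_one_le₀ hlam)
      hx n m
  have hW : eLpNorm W q .count ≤ ENNReal.ofReal ((3 * lam) ^ invR q) ^ d :=
    calc eLpNorm W q .count
        ≤ ∏ _i : Fin d, eLpNorm w q .count := eLpNorm_count_pi_prod_le (fun _ ↦ w) hq
      _ = eLpNorm w q .count ^ d := by simp
      _ ≤ ENNReal.ofReal ((3 * lam) ^ invR q) ^ d := by
          gcongr
          exact eLpNorm_count_inv_pow_le hlam hmq
  calc wNorm d p q f
      ≤ eLpNorm ((A * 2 ^ (m * d)) • W) q .count := wNorm_le_eLpNorm_count hp hq hcube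
    _ = ENNReal.ofReal (A * 2 ^ (m * d)) * eLpNorm W q .count := by
        rw [eLpNorm_const_smul, Real.enorm_of_nonneg (by positivity)]
    _ ≤ ENNReal.ofReal (A * 2 ^ (m * d)) * ENNReal.ofReal ((3 * lam) ^ invR q) ^ d := by gcongr
    _ = ENNReal.ofReal (A * 2 ^ (m * d) * (3 * lam) ^ (d * invR q)) := by
        rw [← ENNReal.ofReal_pow (by positivity), ← ENNReal.ofReal_mul (by positivity),
          mul_comm (d : ℝ), Real.rpow_mul_natCast (by positivity)]

lemma fTrans_eq_fourier {ι : Type*} [Fintype ι] (f : EuclideanSpace ℝ ι → ℂ) :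
    fTrans f = 𝓕 f := by
  ext ω
  rw [fTrans, Real.fourier_eq']
  congr with t
  rw [smul_eq_mul, mul_comm]
  push_cast
  ring_nf

lemma cexp_eq_chirp_neg {V : Type*} [Norm V] (lam : ℝ) (x : V) :
    cexp (I * (-(π * lam * ‖x‖ ^ 2))) = chirp (-lam) x := by
  rw [chirp]
  push_cast
  ring_nf

theorem chirp_fourier_amalgam_bound_general (h : 𝓢(EuclideanSpace ℝ (Fin d), ℂ)) {p q : ℝ≥0∞}
    (hp : p ≠ 0) (hq : q ≠ 0) :
    ∃ c : ℝ, 0 < c ∧ ∀ lam : ℝ, 1 ≤ lam →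
      wNorm d p q (fTrans fun x ↦ h x * cexp (I * (-(π * lam * ‖x‖ ^ 2)))) ≤
        ENNReal.ofReal (c * lam ^ ((d : ℝ) * invR q - d / 2)) := by
  obtain ⟨m, hmq⟩ : ∃ m : ℕ, 2 ≤ m * q :=
    (ENNReal.exists_nat_mul_gt hq ENNReal.ofNat_ne_top).imp fun _ ↦ le_of_lt
  obtain ⟨C, hC, hdecay⟩ := exists_norm_fourier_mul_chirp_le h (m * d)
  refine ⟨C * 2 ^ (m * d) * 3 ^ (d * invR q), by positivity, fun lam hlam ↦ ?_⟩
  have hlam0 : 0 < lam := one_pos.trans_le hlam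
  simp only [cexp_eq_chirp_neg, fTrans_eq_fourier]
  refine (wNorm_le_of_decay hp hmq hlam (hdecay lam hlam)).trans_eq ?_
  rw [finrank_euclideanSpace_fin, Real.mul_rpow three_pos.le hlam0.le, sub_eq_add_neg,
    Real.rpow_add hlam0]
  ring_nf

end WienerAmalgam

/-- `‖ĥ_λ‖_{W(L^p,L^q)} ≲ λ^{d/q - d/2}`. -/
theorem chirp_fourier_amalgam_bound (d : ℕ) (h : EuclideanSpace ℝ (Fin d) → ℂ)
    (hsm : ContDiff ℝ (⊤ : ℕ∞) h) (hsupp : HasCompactSupport h)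
    (p q : ℝ≥0∞) (hp : 1 ≤ p) (hq : 1 ≤ q) :
    ∃ c : ℝ, 0 < c ∧
      ∀ lam : ℝ, 1 ≤ lam →
        wNorm d p q
            (fTrans fun x => h x * Complex.exp (Complex.I * (-(Real.pi * lam * ‖x‖ ^ 2)))) ≤
          ENNReal.ofReal (c * lam ^ ((d : ℝ) * invR q - d / 2)) :=
  chirp_fourier_amalgam_bound_general (hsupp.toSchwartzMap hsm) (one_pos.trans_le hp).ne'
    (one_pos.trans_le hq).ne'
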